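/- arXiv:2604.19108 — 5 statements merged into one kernel-verified Lean document; each statement's English description precedes it below -/
import Mathlib

section
/- Let ι be a finite nonempty index type, ℓ : ι → ℝ, and q : ι → ℝ a probability vector. If q_i = 0 for some index i, then the partial derivative of F_q at ℓ in coordinate i (i.e., the derivative of t ↦ F_q(Function.update ℓ i t) at t = ℓ_i) equals softmax(ℓ)_i, and in particular this partial derivative is strictly positive. -/
/-! The KL objective splits as `∑ q log q - ∑ q ℓ + log ∑ exp ℓ` (using `∑ q = 1`). When `q i = 0`
only the log-partition term depends on the `i`-th logit, and its partial derivative is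
`softmax ℓ i`. -/

open Finset Real

/-- Softmax of a logit vector on a finite index type. -/
noncomputable def softmax {ι : Type*} [Fintype ι] (ℓ : ι → ℝ) (i : ι) : ℝ :=
  Real.exp (ℓ i) / ∑ j, Real.exp (ℓ j)

/-- Discrete KL objective `F_q(ℓ) = ∑ i, q i * log (q i / softmax ℓ i)`.
Terms with `q i = 0` contribute `0` automatically since `0 * x = 0`. -/
noncomputable def klObj {ι : Type*} [Fintype ι] (q ℓ : ι → ℝ) : ℝ :=
  ∑ i, q i * Real.log (q i / softmax ℓ i)

lemma sum_exp_pos {ι : Type*} [Fintype ι] [Nonempty ι] (ℓ : ι → ℝ) :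
    0 < ∑ j, Real.exp (ℓ j) :=
  Finset.sum_pos (fun _ _ => Real.exp_pos _) Finset.univ_nonempty

lemma klObj_eq_add_log_sum_exp {ι : Type*} [Fintype ι] [Nonempty ι] (q ℓ : ι → ℝ)
    (hq1 : ∑ i, q i = 1) :
    klObj q ℓ = ∑ j, (q j * Real.log (q j) - q j * ℓ j) + Real.log (∑ j, Real.exp (ℓ j)) := by
  have hZ := (sum_exp_pos ℓ).ne'
  calc klObj q ℓ
      = ∑ j, ((q j * Real.log (q j) - q j * ℓ j) + q j * Real.log (∑ j, Real.exp (ℓ j))) := by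
        refine Finset.sum_congr rfl fun j _ => ?_
        by_cases h : q j = 0
        · simp [h]
        · unfold softmax
          rw [Real.log_div h (div_ne_zero (Real.exp_pos _).ne' hZ),
            Real.log_div (Real.exp_pos _).ne' hZ, Real.log_exp]
          ring
    _ = _ := by rw [Finset.sum_add_distrib, ← Finset.sum_mul, hq1, one_mul]

theorem klObj_deriv_update_of_target_zero {ι : Type*} [Fintype ι] [Nonempty ι] [DecidableEq ι]
    (ℓ q : ι → ℝ) (hq0 : ∀ i, 0 ≤ q i) (hq1 : ∑ i, q i = 1) (i : ι) (hqi : q i = 0) :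
    deriv (fun t => klObj q (Function.update ℓ i t)) (ℓ i) = softmax ℓ i ∧
      0 < deriv (fun t => klObj q (Function.update ℓ i t)) (ℓ i) := by
  have hpos : 0 < softmax ℓ i := div_pos (Real.exp_pos _) (sum_exp_pos ℓ)
  have hfun : (fun t => klObj q (Function.update ℓ i t)) = fun t =>
      ∑ j, (q j * Real.log (q j) - q j * ℓ j) +
        Real.log (∑ j, Real.exp (Function.update ℓ i t j)) := by
    funext t
    rw [klObj_eq_add_log_sum_exp q _ hq1]
    congr 1
    refine Finset.sum_congr rfl fun j _ => ?_
    by_cases h : j = i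
    · subst h
      simp [hqi]
    · rw [Function.update_of_ne h]
  have hsum : HasDerivAt (fun t => ∑ j, Real.exp (Function.update ℓ i t j))
      (Real.exp (ℓ i)) (ℓ i) := by
    have hsplit : (fun t => ∑ j, Real.exp (Function.update ℓ i t j)) =
        fun t => Real.exp t + ∑ j ∈ Finset.univ.erase i, Real.exp (ℓ j) := by
      funext t
      rw [← Finset.add_sum_erase _ _ (Finset.mem_univ i), Function.update_self]
      congr 1
      refine Finset.sum_congr rfl fun j hj => ?_
      rw [Function.update_of_ne (Finset.ne_of_mem_erase hj)]
    rw [hsplit]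
    exact (Real.hasDerivAt_exp _).add_const _
  have hderiv : deriv (fun t => klObj q (Function.update ℓ i t)) (ℓ i) = softmax ℓ i := by
    rw [hfun]
    have h := (hsum.log (sum_exp_pos _).ne').const_add
      (∑ j, (q j * Real.log (q j) - q j * ℓ j))
    rw [h.deriv, Function.update_eq_self, softmax]
  exact ⟨hderiv, hderiv ▸ hpos⟩
end

section
/- Let ι be a finite nonempty index type and q : ι → ℝ a probability vector such that q_y = 0 for some index y. Then F_q(ℓ) > 0 for every ℓ : ι → ℝ; that is, the KL objective with a target distribution that assigns zero mass to some class is strictly positive at every logit vector, so its infimum is never attained. -/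
/-!
Write `p = softmax ℓ`, a strictly positive probability vector. The bound
`q i - p i ≤ q i * log (q i / p i)` holds termwise (`sub_le_mul_log_div`), and the left-hand sides
sum to `1 - 1 = 0`. At `i = y` the bound is strict, since it reads `-p y < 0`; hence the KL
objective is strictly positive.
-/

open Finset Real

/-- The tangent-line bound `log x ≥ 1 - 1 / x` at `x = a / p`, multiplied by `a`; at `a = 0` it
reads `-p ≤ 0`. -/
lemma sub_le_mul_log_div {a p : ℝ} (ha : 0 ≤ a) (hp : 0 < p) :
    a - p ≤ a * Real.log (a / p) := by
  rcases ha.eq_or_lt with rfl | ha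
  · simp [hp.le]
  · have h := mul_le_mul_of_nonneg_left (Real.one_sub_inv_le_log_of_pos (div_pos ha hp)) ha.le
    have e : a * (1 - (a / p)⁻¹) = a - p := by field_simp
    linarith

theorem klObj_pos_of_target_zero
    {ι : Type*} [Fintype ι] [Nonempty ι]
    (q : ι → ℝ) (hq0 : ∀ i, 0 ≤ q i) (hq1 : ∑ i, q i = 1)
    (y : ι) (hqy : q y = 0) :
    ∀ ℓ : ι → ℝ, 0 < klObj q ℓ := by
  intro ℓ
  have hZ : 0 < ∑ j, Real.exp (ℓ j) :=
    Finset.sum_pos (fun j _ => Real.exp_pos _) Finset.univ_nonempty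
  have hp : ∀ i, 0 < softmax ℓ i := fun i => div_pos (Real.exp_pos _) hZ
  have hp1 : ∑ i, softmax ℓ i = 1 := by
    simp only [softmax, ← Finset.sum_div]
    exact div_self hZ.ne'
  have hlt : ∑ i, (q i - softmax ℓ i) < klObj q ℓ := by
    refine Finset.sum_lt_sum (fun i _ => sub_le_mul_log_div (hq0 i) (hp i))
      ⟨y, Finset.mem_univ y, ?_⟩
    simpa [hqy] using hp y
  rwa [Finset.sum_sub_distrib, hq1, hp1, sub_self] at hlt
end

section
/- Let ι be a finite index type with at least two elements, let p, q : ι → ℝ be probability vectors, and let y : ι satisfy q_y = 0. If ∑_i |p_i − q_i| < max_i q_i, then p_y < max_{k ≠ y} p_k; that is, when p is close enough to q in ℓ¹ distance, the probability assigned to the zero-target class y is strictly smaller than the largest probability among the other classes. -/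
open Finset Real

theorem l1_close_to_zero_target_implies_below_competitor
    {ι : Type*} [Fintype ι] [DecidableEq ι] [Nontrivial ι]
    (p q : ι → ℝ)
    (hp0 : ∀ i, 0 ≤ p i) (hp1 : ∑ i, p i = 1)
    (hq0 : ∀ i, 0 ≤ q i) (hq1 : ∑ i, q i = 1)
    (y : ι) (hqy : q y = 0)
    (hclose : ∑ i, |p i - q i| < Finset.univ.sup' Finset.univ_nonempty q) :
    p y < (Finset.univ.erase y).sup'
      (by
        obtain ⟨z, hz⟩ := exists_ne y
        exact ⟨z, Finset.mem_erase.2 ⟨hz, Finset.mem_univ z⟩⟩) p := by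
  -- Let `m` maximise `q`. The `y` and `m` terms of the sum alone give
  -- `p y + |p m - q m| < q m`, hence `p y < p m`.
  obtain ⟨m, -, hm⟩ := Finset.exists_mem_eq_sup' Finset.univ_nonempty q
  rw [hm] at hclose
  have hmy : m ≠ y := by
    rintro rfl
    have : 0 ≤ ∑ i, |p i - q i| := Finset.sum_nonneg fun i _ => abs_nonneg _
    linarith
  have hpair : |p m - q m| + |p y - q y| ≤ ∑ i, |p i - q i| := by
    rw [← Finset.sum_pair (f := fun i => |p i - q i|) hmy]
    exact Finset.sum_le_sum_of_subset_of_nonneg (Finset.subset_univ _)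
      fun i _ _ => abs_nonneg _
  have hlt : p y < p m := by
    have h1 := neg_abs_le (p m - q m)
    have h2 := le_abs_self (p y - q y)
    linarith
  exact hlt.trans_le
    (Finset.le_sup' p (Finset.mem_erase.2 ⟨hmy, Finset.mem_univ m⟩))
end

section
/- Let ι be a finite nonempty index type and let p, q : ι → ℝ be probability vectors with p_i > 0 for every i. Then (∑_i |q_i − p_i|)² ≤ 2 · ∑_i q_i · log(q_i / p_i), where terms with q_i = 0 are interpreted as 0 (discrete Pinsker inequality: the squared ℓ¹ distance between q and p is at most twice the Kullback–Leibler divergence KL(q‖p)). -/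
/-!
Write `x i = q i / p i` and `klFun x = x log x + 1 - x`. Since `p` and `q` have the same total mass,
`KL(q ‖ p) = ∑ p i * klFun (x i)`. The proof rests on the one-variable bound
`3 (x - 1)² ≤ (2 x + 4) klFun x` for `x ≥ 0` (`three_mul_sub_one_sq_le`), which gives
`(q i - p i)² ≤ ((2 q i + 4 p i) / 3) * (p i * klFun (x i))`. The first factors sum to `2`, so the
Cauchy–Schwarz inequality yields the claim.
-/

open Finset Real

open InformationTheory in
/-- The difference of the two sides has derivative `4 (x + 1) log x - 8 (x - 1)`, whose sign is that
of `x - 1`, so it is minimal at `x = 1`, where it vanishes. -/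
lemma three_mul_sub_one_sq_le {x : ℝ} (hx : 0 ≤ x) :
    3 * (x - 1) ^ 2 ≤ (2 * x + 4) * klFun x := by
  let h : ℝ → ℝ := fun y => (2 * y + 4) * klFun y - 3 * (y - 1) ^ 2
  have hcont : Continuous h := by
    have := continuous_klFun
    fun_prop
  have hderiv : ∀ y : ℝ, y ≠ 0 → HasDerivAt h (4 * (y + 1) * log y - 8 * (y - 1)) y := by
    intro y hy
    have h1 : HasDerivAt (fun y : ℝ => 2 * y + 4) 2 y := by
      simpa using ((hasDerivAt_id y).const_mul 2).add_const 4
    have h2 : HasDerivAt (fun y : ℝ => 3 * (y - 1) ^ 2) (6 * (y - 1)) y := by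
      refine ((((hasDerivAt_id' y).sub_const 1).pow 2).const_mul 3).congr_deriv ?_
      norm_num
      ring
    refine ((h1.mul (hasDerivAt_klFun hy)).sub h2).congr_deriv ?_
    rw [klFun_apply]
    ring
  have hlog : ∀ y : ℝ, 1 ≤ y → 2 * (y - 1) ≤ (y + 1) * log y := by
    intro y hy
    have key := le_log_one_add_of_nonneg (x := y - 1) (by linarith)
    rw [div_le_iff₀ (by linarith), add_sub_cancel] at key
    linarith
  have h_one : h 1 = 0 := by simp [h, klFun_one]
  suffices h 1 ≤ h x by
    rw [h_one] at this
    simp only [h] at this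
    linarith
  rcases le_total 1 x with h1x | hx1
  · refine monotoneOn_of_hasDerivWithinAt_nonneg (convex_Ici 1) hcont.continuousOn
      (f' := fun y => 4 * (y + 1) * log y - 8 * (y - 1)) ?_ ?_ Set.self_mem_Ici h1x h1x
    · intro y hy
      rw [interior_Ici, Set.mem_Ioi] at hy
      exact (hderiv y (by linarith)).hasDerivWithinAt
    · intro y hy
      rw [interior_Ici, Set.mem_Ioi] at hy
      linarith [hlog y hy.le]
  · refine antitoneOn_of_hasDerivWithinAt_nonpos (convex_Icc 0 1) hcont.continuousOn
      (f' := fun y => 4 * (y + 1) * log y - 8 * (y - 1)) ?_ ?_ ⟨hx, hx1⟩ ⟨zero_le_one, le_rfl⟩ hx1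
    · intro y hy
      rw [interior_Icc] at hy
      exact (hderiv y hy.1.ne').hasDerivWithinAt
    · intro y hy
      rw [interior_Icc] at hy
      -- The bound on `(0, 1)` is the one on `(1, ∞)` at `y⁻¹`, multiplied by `-y`.
      have key := hlog y⁻¹ ((one_le_inv₀ hy.1).2 hy.2.le)
      rw [log_inv] at key
      have key' := mul_le_mul_of_nonneg_left key hy.1.le
      have e1 : y * (2 * (y⁻¹ - 1)) = 2 * (1 - y) := by
        field_simp [hy.1.ne']
      have e2 : y * ((y⁻¹ + 1) * -log y) = -((y + 1) * log y) := by
        field_simp [hy.1.ne']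
        ring
      linarith

/-- Discrete Pinsker inequality: the squared ℓ¹ distance between probability
vectors `q` and `p` is at most twice the KL divergence `KL(q ‖ p)`.
Terms with `q i = 0` contribute `0` automatically since `0 * x = 0`. -/
theorem discrete_pinsker
    {ι : Type*} [Fintype ι] [Nonempty ι]
    (p q : ι → ℝ)
    (hp0 : ∀ i, 0 < p i) (hp1 : ∑ i, p i = 1)
    (hq0 : ∀ i, 0 ≤ q i) (hq1 : ∑ i, q i = 1) :
    (∑ i, |q i - p i|) ^ 2 ≤ 2 * ∑ i, q i * Real.log (q i / p i) := by
  have hx0 : ∀ i, 0 ≤ q i / p i := fun i => div_nonneg (hq0 i) (hp0 i).le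
  have hweight : ∑ i, (2 * q i + 4 * p i) / 3 = 2 := by
    rw [← Finset.sum_div, Finset.sum_add_distrib, ← Finset.mul_sum, ← Finset.mul_sum, hp1, hq1]
    norm_num
  have hterm : ∀ i, p i * InformationTheory.klFun (q i / p i)
      = q i * Real.log (q i / p i) + p i - q i := by
    intro i
    have := (hp0 i).ne'
    rw [InformationTheory.klFun_apply]
    field_simp
  have hkl : ∑ i, p i * InformationTheory.klFun (q i / p i)
      = ∑ i, q i * Real.log (q i / p i) := by
    simp_rw [hterm]
    rw [Finset.sum_sub_distrib, Finset.sum_add_distrib, hp1, hq1]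
    ring
  rw [← hkl, ← hweight]
  refine Finset.sum_sq_le_sum_mul_sum_of_sq_le_mul _ (fun i _ => ?_) (fun i _ => ?_) fun i _ => ?_
  · linarith [hq0 i, hp0 i]
  · exact mul_nonneg (hp0 i).le (InformationTheory.klFun_nonneg (hx0 i))
  · have hpi := (hp0 i).ne'
    have key := mul_le_mul_of_nonneg_left (three_mul_sub_one_sq_le (hx0 i)) (sq_nonneg (p i))
    have e1 : p i ^ 2 * (3 * (q i / p i - 1) ^ 2) = 3 * (q i - p i) ^ 2 := by
      field_simp
    have e2 : p i ^ 2 * ((2 * (q i / p i) + 4) * InformationTheory.klFun (q i / p i))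
        = (2 * q i + 4 * p i) * (p i * InformationTheory.klFun (q i / p i)) := by
      generalize InformationTheory.klFun (q i / p i) = k
      field_simp
    rw [sq_abs]
    linarith
end

section
/- (Effect of Negative Unlearning Margin, quantitative form.) Let ι be a finite index type with at least two elements, let q : ι → ℝ be a probability vector, let y : ι satisfy q_y = 0, and set q* = max_i q_i (so q* > 0). For any ℓ : ι → ℝ, if F_q(ℓ) < (q*)² / 2, then the unlearning margin is negative: UM(ℓ, y) = ℓ_y − max_{k ≠ y} ℓ_k < 0. In words, once the KL objective toward the retain-class target distribution q is sufficiently small, the logit of the original class y is strictly below the maximum competing logit. -/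
/-! The Gibbs variational bound `KL(q ‖ p) ≥ 𝔼_q[g] + 1 - 𝔼_p[exp g]` is applied to a two-point
tilt. Write `p = softmax ℓ`, let `m` be a maximiser of `q`, put `t = q m`, and suppose that `ℓ y`
is at least every other logit. Then `p m ≤ p y`, hence `p m ≤ 1 / 2`. For
`g = t • (1_m - 1_y) - t² / 2` one has `𝔼_q[g] = t² - t² / 2` because `q y = 0`, while
`𝔼_p[exp g] ≤ cosh t * exp (-t² / 2) ≤ 1`. So the KL objective is at least `t² / 2`. -/

open Finset Real

/-- Pointwise form of the Gibbs variational inequality, a tilted version of `log x ≤ x - 1`. -/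
lemma tilted_le_mul_log_div {a b : ℝ} (ha : 0 ≤ a) (hb : 0 < b) (c : ℝ) :
    a * c + a - b * Real.exp c ≤ a * Real.log (a / b) := by
  rcases ha.eq_or_lt with rfl | ha
  · have := mul_pos hb (Real.exp_pos c)
    simp only [zero_mul, zero_add, zero_sub]
    linarith
  · have h := Real.log_le_sub_one_of_pos (x := b * Real.exp c / a) (by positivity)
    rw [Real.log_div (by positivity) ha.ne', Real.log_mul hb.ne' (Real.exp_pos c).ne',
      Real.log_exp] at h
    rw [Real.log_div ha.ne' hb.ne']
    have h2 := mul_le_mul_of_nonneg_left h ha.le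
    have h3 : a * (b * Real.exp c / a - 1) = b * Real.exp c - a := by field_simp
    linarith

/-- The tilt by `exp t` at `m` and `exp (-t)` at `y` increases the mass of a probability vector
by a factor of at most `cosh t` when `p m ≤ p y`. -/
lemma sum_tilt_le_cosh {ι : Type*} [Fintype ι] [DecidableEq ι] {p : ι → ℝ}
    (hp0 : ∀ i, 0 ≤ p i) (hp1 : ∑ i, p i = 1) {m y : ι} (hmy : m ≠ y) (hle : p m ≤ p y)
    {t : ℝ} (ht : 0 ≤ t) :
    ∑ i, p i * Real.exp ((if i = m then t else 0) - (if i = y then t else 0)) ≤ Real.cosh t := by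
  have hhalf : p m + p y ≤ 1 := by
    rw [← hp1, ← Finset.sum_pair hmy]
    exact Finset.sum_le_sum_of_subset_of_nonneg (Finset.subset_univ _) fun i _ _ => hp0 i
  have hsum : ∑ i, p i * Real.exp ((if i = m then t else 0) - (if i = y then t else 0))
      = 1 + p m * (Real.exp t - 1) + p y * (Real.exp (-t) - 1) := by
    have hterm : ∀ i, p i * Real.exp ((if i = m then t else 0) - (if i = y then t else 0))
        = p i + (if i = m then p i * (Real.exp t - 1) else 0)
          + (if i = y then p i * (Real.exp (-t) - 1) else 0) := by
      intro i
      by_cases h1 : i = m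
      · have h2 : i ≠ y := fun h => hmy (h1.symm.trans h)
        simp only [if_pos h1, if_neg h2, sub_zero]
        ring
      · by_cases h2 : i = y
        · simp only [if_neg h1, if_pos h2, zero_sub]
          ring
        · simp [h1, h2]
    simp only [hterm, Finset.sum_add_distrib, hp1, Finset.sum_ite_eq', Finset.mem_univ, if_true]
  rw [hsum, Real.cosh_eq]
  have hneg : Real.exp (-t) ≤ 1 := Real.exp_le_one_iff.2 (by linarith)
  have hcosh : 1 ≤ Real.cosh t := Real.one_le_cosh t
  rw [Real.cosh_eq] at hcosh
  -- `p y` may be lowered to `p m`, and then `p m ≤ 1 / 2` bounds the coefficient of `cosh t - 1`.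
  nlinarith [mul_nonneg (sub_nonneg.2 hle) (sub_nonneg.2 hneg),
    mul_nonneg (show 0 ≤ 1 - 2 * p m by linarith) (sub_nonneg.2 hcosh)]

/-- Effect of Negative Unlearning Margin, quantitative form: if the KL objective
toward a target `q` with `q y = 0` is below `(max_i q_i)² / 2`, then the
unlearning margin `UM(ℓ, y) = ℓ y − max_{k ≠ y} ℓ k` is negative. -/
theorem negative_unlearning_margin_of_small_klObj
    {ι : Type*} [Fintype ι] [DecidableEq ι] [Nontrivial ι]
    (q : ι → ℝ) (hq0 : ∀ i, 0 ≤ q i) (hq1 : ∑ i, q i = 1)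
    (y : ι) (hqy : q y = 0) (ℓ : ι → ℝ)
    (hsmall : klObj q ℓ < (Finset.univ.sup' Finset.univ_nonempty q) ^ 2 / 2) :
    ℓ y - (Finset.univ.erase y).sup'
      (by
        obtain ⟨z, hz⟩ := exists_ne y
        exact ⟨z, Finset.mem_erase.2 ⟨hz, Finset.mem_univ z⟩⟩) ℓ < 0 := by
  by_contra hcon
  have hmax : ∀ k, k ≠ y → ℓ k ≤ ℓ y := fun k hk =>
    (Finset.le_sup' ℓ (Finset.mem_erase.2 ⟨hk, Finset.mem_univ k⟩)).trans (by linarith)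
  obtain ⟨m, -, hm⟩ := Finset.exists_mem_eq_sup' (Finset.univ_nonempty (α := ι)) q
  rw [hm] at hsmall
  have hqm : 0 < q m := by
    by_contra hneg
    have hzero : ∀ i, q i = 0 := fun i =>
      le_antisymm ((hm ▸ Finset.le_sup' q (Finset.mem_univ i)).trans (not_lt.1 hneg)) (hq0 i)
    simp [hzero] at hq1
  have hmy : m ≠ y := by
    rintro rfl
    exact hqm.ne' hqy
  have hZ : 0 < ∑ j, Real.exp (ℓ j) :=
    Finset.sum_pos (fun j _ => Real.exp_pos _) Finset.univ_nonempty
  have hp : ∀ i, 0 < softmax ℓ i := fun i => div_pos (Real.exp_pos _) hZ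
  have hp1 : ∑ i, softmax ℓ i = 1 := by
    simp only [softmax]
    rw [← Finset.sum_div, div_self hZ.ne']
  have hle : softmax ℓ m ≤ softmax ℓ y :=
    div_le_div_of_nonneg_right (Real.exp_le_exp.2 (hmax m hmy)) hZ.le
  have htilt := sum_tilt_le_cosh (fun i => (hp i).le) hp1 hmy hle hqm.le
  set f : ι → ℝ := fun i => (if i = m then q m else 0) - (if i = y then q m else 0) with hf
  have hkl : ∑ i, (q i * (f i - q m ^ 2 / 2) + q i
      - softmax ℓ i * Real.exp (f i - q m ^ 2 / 2)) ≤ klObj q ℓ :=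
    Finset.sum_le_sum fun i _ => tilted_le_mul_log_div (hq0 i) (hp i) _
  have hqf : ∑ i, q i * f i = q m ^ 2 := by
    simp [hf, mul_sub, Finset.sum_sub_distrib, hqy, sq]
  have hmean : ∑ i, q i * (f i - q m ^ 2 / 2) = q m ^ 2 / 2 := by
    simp only [mul_sub, Finset.sum_sub_distrib, ← Finset.sum_mul, hqf, hq1]
    ring
  have hmass : ∑ i, softmax ℓ i * Real.exp (f i - q m ^ 2 / 2) ≤ 1 := by
    simp only [Real.exp_sub, ← mul_div_assoc]
    rw [← Finset.sum_div, div_le_one (Real.exp_pos _)]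
    exact htilt.trans (Real.cosh_le_exp_half_sq _)
  rw [Finset.sum_sub_distrib, Finset.sum_add_distrib, hmean, hq1] at hkl
  linarith
end
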